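/- arXiv:1912.01407 — 2 statements merged into one kernel-verified Lean document; each statement's English description precedes it below -/
import Mathlib

section
/- Let q be a complex number with 0 < |q| < 1, fix a square root q^{1/2} of q, and let a, b be complex numbers with max{|a|,|b|} < 1. Then ∫₀^π h(cos θ; 1, -1, q^{1/2}, -q^{1/2}) / h(cos θ; a, b) dθ = 2π / ((q; q)_∞ (ab; q)_∞). -/
open Complex MeasureTheory

/-- The q-shifted factorial `(x; q)_∞ = ∏_{k=0}^∞ (1 - x q^k)`. -/
noncomputable def qp (q x : ℂ) : ℂ := ∏' k : ℕ, (1 - x * q ^ k)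

/-- The finite q-shifted factorial `(x; q)_n = ∏_{k=0}^{n-1} (1 - x q^k)`. -/
noncomputable def qpn (q x : ℂ) (n : ℕ) : ℂ := ∏ k ∈ Finset.range n, (1 - x * q ^ k)

/-- For `x = cos θ`, `h(x; λ) = (λ e^{iθ}; q)_∞ (λ e^{-iθ}; q)_∞`. -/
noncomputable def hh (q : ℂ) (θ : ℝ) (l : ℂ) : ℂ :=
  qp q (l * Complex.exp ((θ : ℂ) * Complex.I)) *
    qp q (l * Complex.exp (-((θ : ℂ) * Complex.I)))

lemma qp_summable {q : ℂ} (hq : ‖q‖ < 1) (x : ℂ) : Summable fun k : ℕ => ‖-(x * q ^ k)‖ := by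
  simpa [norm_mul, norm_pow] using
    (summable_geometric_of_lt_one (norm_nonneg _) hq).mul_left ‖x‖

lemma qp_mult {q : ℂ} (hq : ‖q‖ < 1) (x : ℂ) : Multipliable fun k : ℕ => (1 - x * q ^ k) := by
  simpa [sub_eq_add_neg] using multipliable_one_add_of_summable (qp_summable hq x)

lemma qp_zero (q : ℂ) : qp q 0 = 1 := by simp [qp]

lemma qp_rec {q : ℂ} (hq : ‖q‖ < 1) (x : ℂ) : qp q x = (1 - x) * qp q (q * x) := by
  have e : ∀ k : ℕ, 1 - x * q ^ (k + 1) = 1 - q * x * q ^ k := fun k => by ring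
  unfold qp
  rw [tprod_eq_zero_mul' (f := fun k : ℕ => 1 - x * q ^ k)]
  · simp only [e]; simp
  · simp only [e]; exact qp_mult hq _

lemma qp_ne_zero {q : ℂ} (hq : ‖q‖ < 1) {x : ℂ} (hx : ‖x‖ < 1) : qp q x ≠ 0 := by
  unfold qp
  simp only [sub_eq_add_neg]
  refine tprod_one_add_ne_zero_of_summable (f := fun k : ℕ => -(x * q ^ k)) ?_ (qp_summable hq x)
  intro k h
  have h1 : x * q ^ k = 1 := by linear_combination -h
  have h2 : ‖x * q ^ k‖ < 1 := by
    rw [norm_mul, norm_pow]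
    calc ‖x‖ * ‖q‖ ^ k ≤ ‖x‖ * 1 := by
          gcongr; exact pow_le_one₀ (norm_nonneg _) hq.le
      _ < 1 := by simpa
  rw [h1] at h2; simp at h2

lemma qp_diff {q : ℂ} (hq : ‖q‖ < 1) : Differentiable ℂ (qp q) := by
  intro x
  have hU : IsOpen (Metric.ball (0 : ℂ) (‖x‖ + 1)) := Metric.isOpen_ball
  have h := Summable.hasProdLocallyUniformlyOn_nat_one_add (f := fun (k : ℕ) (x : ℂ) => -(x * q ^ k)) hU
    (u := fun k => (‖x‖ + 1) * ‖q‖ ^ k)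
    ((summable_geometric_of_lt_one (norm_nonneg _) hq).mul_left _)
    (.of_forall fun k y hy => by
      rw [norm_neg, norm_mul, norm_pow]
      gcongr
      simpa using (Metric.mem_ball.1 hy).le)
    (fun n => by fun_prop)
  have h2 := h.differentiableOn
    (.of_forall fun _ ↦ by simpa [Finset.prod_fn] using
      DifferentiableOn.finsetProd (fun _ _ ↦ by fun_prop)) hU
  have h3 : DifferentiableAt ℂ (fun x : ℂ ↦ ∏' (i : ℕ), (1 + -(x * q ^ i))) x :=
    h2.differentiableAt (hU.mem_nhds (by simp))
  simp only [← sub_eq_add_neg] at h3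
  exact h3

lemma qp_cont {q : ℂ} (hq : ‖q‖ < 1) : Continuous (qp q) := (qp_diff hq).continuous

lemma qp_quad {q u : ℂ} (hq : ‖q‖ < 1) (hu : u ^ 2 = q) (x : ℂ) :
    qp q x * qp q (-x) * qp q (u * x) * qp q (-(u * x)) = qp q (x ^ 2) := by
  have hq2 : ‖q ^ 2‖ < 1 := by rw [norm_pow]; exact pow_lt_one₀ (norm_nonneg _) hq (by norm_num)
  have e1 : ∀ k : ℕ, 1 - x ^ 2 * q ^ (2 * k) = (1 - x * q ^ k) * (1 - (-x) * q ^ k) := fun k => by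
    ring
  have e2 : ∀ k : ℕ, 1 - x ^ 2 * q ^ (2 * k + 1)
      = (1 - u * x * q ^ k) * (1 - (-(u * x)) * q ^ k) := fun k => by
    rw [pow_succ]; linear_combination (x ^ 2 * q ^ (2 * k)) * hu
  have m1 := (qp_mult hq x).mul (qp_mult hq (-x))
  have m2 := (qp_mult hq (u * x)).mul (qp_mult hq (-(u * x)))
  have := tprod_even_mul_odd (f := fun k : ℕ => 1 - x ^ 2 * q ^ k)
    (by simpa only [e1] using m1) (by simpa only [e2] using m2)
  simp only [e1, e2] at this
  rw [(qp_mult hq x).tprod_mul (qp_mult hq (-x)),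
    (qp_mult hq (u * x)).tprod_mul (qp_mult hq (-(u * x)))] at this
  unfold qp
  rw [← this]; ring

/-- integral over the unit circle in the angle variable -/
noncomputable def MM (f : ℂ → ℂ) : ℂ :=
  ∫ θ in (0:ℝ)..(2 * Real.pi), f (Complex.exp ((θ : ℂ) * Complex.I))

lemma nexp (θ : ℝ) : ‖Complex.exp ((θ : ℂ) * Complex.I)‖ = 1 := Complex.norm_exp_ofReal_mul_I θ

lemma MM_congr {f g : ℂ → ℂ} (h : ∀ z : ℂ, ‖z‖ = 1 → f z = g z) : MM f = MM g := by
  unfold MM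
  exact intervalIntegral.integral_congr fun θ _ => h _ (nexp θ)

lemma MM_cont {f : ℂ → ℂ} (hf : ∀ z : ℂ, ‖z‖ = 1 → ContinuousAt f z) :
    Continuous (fun θ : ℝ => f (Complex.exp ((θ : ℂ) * Complex.I))) := by
  rw [continuous_iff_continuousAt]
  intro θ
  exact ContinuousAt.comp (f := fun θ : ℝ => Complex.exp ((θ : ℂ) * Complex.I))
    (hf _ (nexp θ)) (by fun_prop)

lemma MM_int {f : ℂ → ℂ} (hf : ∀ z : ℂ, ‖z‖ = 1 → ContinuousAt f z) :
    IntervalIntegrable (fun θ : ℝ => f (Complex.exp ((θ : ℂ) * Complex.I))) volume 0 (2 * Real.pi) :=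
  (MM_cont hf).intervalIntegrable _ _

lemma MM_add {f g : ℂ → ℂ} (hf : ∀ z : ℂ, ‖z‖ = 1 → ContinuousAt f z)
    (hg : ∀ z : ℂ, ‖z‖ = 1 → ContinuousAt g z) : MM (fun z => f z + g z) = MM f + MM g :=
  intervalIntegral.integral_add (MM_int hf) (MM_int hg)

lemma MM_smul (c : ℂ) (f : ℂ → ℂ) : MM (fun z => c * f z) = c * MM f :=
  intervalIntegral.integral_const_mul _ _

lemma MM_inv (f : ℂ → ℂ) : MM (fun z => f z⁻¹) = MM f := by
  unfold MM
  have := intervalIntegral.integral_comp_sub_left (a := 0) (b := 2 * Real.pi)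
    (fun θ : ℝ => f (Complex.exp ((θ : ℂ) * Complex.I))) (2 * Real.pi)
  simp only [sub_self, sub_zero] at this
  rw [← this]
  apply intervalIntegral.integral_congr
  intro θ _
  simp only
  congr 1
  rw [← Complex.exp_neg]
  push_cast
  rw [sub_mul, Complex.exp_sub, Complex.exp_two_pi_mul_I, Complex.exp_neg, one_div]

lemma MM_periodic (f : ℂ → ℂ) :
    Function.Periodic (fun θ : ℝ => f (Complex.exp ((θ : ℂ) * Complex.I))) (2 * Real.pi) := by
  intro θ
  simp only
  push_cast
  rw [add_mul, Complex.exp_add, Complex.exp_two_pi_mul_I, mul_one]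

lemma MM_rot (f : ℂ → ℂ) (φ : ℝ) : MM (fun z => f (Complex.exp ((φ : ℂ) * Complex.I) * z)) = MM f := by
  unfold MM
  have h1 := (MM_periodic f).intervalIntegral_add_eq φ 0
  have h2 := intervalIntegral.integral_comp_add_right (a := 0) (b := 2 * Real.pi)
    (fun θ : ℝ => f (Complex.exp ((θ : ℂ) * Complex.I))) φ
  rw [zero_add] at h1 h2
  rw [← h1, add_comm φ, ← h2]
  apply intervalIntegral.integral_congr
  intro θ _
  simp only
  congr 1
  push_cast
  rw [add_mul, Complex.exp_add, mul_comm]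

lemma MM_circ (f : ℂ → ℂ) (R : ℝ) (hR : R ≠ 0) :
    (∮ z in C(0, R), (z - 0)⁻¹ • f z) = Complex.I * MM (fun z => f (R * z)) := by
  unfold MM
  rw [circleIntegral, ← intervalIntegral.integral_const_mul]
  apply intervalIntegral.integral_congr
  intro θ _
  have : circleMap 0 R θ ≠ 0 := circleMap_ne_center hR
  simp only [deriv_circleMap, smul_eq_mul, sub_zero]
  field_simp
  simp [circleMap, mul_comm]

lemma MM_shift {f : ℂ → ℂ} {s : ℂ} (hs0 : s ≠ 0) (hs1 : ‖s‖ < 1)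
    (hf : ∀ z : ℂ, ‖s‖ ≤ ‖z‖ → ‖z‖ ≤ 1 → DifferentiableAt ℂ f z) :
    MM (fun z => f (s * z)) = MM f := by
  have h0 : 0 < ‖s‖ := norm_pos_iff.2 hs0
  have h := Complex.circleIntegral_sub_center_inv_smul_eq_of_differentiable_on_annulus_off_countable
    (c := 0) (f := f) h0 hs1.le Set.countable_empty
    (fun z hz => (hf z (by simpa using hz.2) (by simpa using hz.1)).continuousAt.continuousWithinAt)
    (fun z hz => hf z (by simpa using (not_le.1 (by simpa using hz.1.2)).le)
      (by simpa using (Metric.mem_ball.1 hz.1.1).le))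
  rw [MM_circ f 1 one_ne_zero, MM_circ f _ h0.ne'] at h
  have h2 := mul_left_cancel₀ Complex.I_ne_zero h
  simp only [Complex.ofReal_one, one_mul] at h2
  rw [h2, ← MM_rot (fun z => f (‖s‖ * z)) s.arg]
  congr 1
  funext z
  rw [← mul_assoc, Complex.norm_mul_exp_arg_mul_I]

lemma MM_center {f : ℂ → ℂ} (hf : Differentiable ℂ f) : MM f = 2 * Real.pi * f 0 := by
  have h := Complex.circleIntegral_sub_center_inv_smul_of_differentiable_on_off_countable
    (c := 0) (f := f) (R := 1) one_pos Set.countable_empty hf.continuous.continuousOn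
    (fun z _ => hf z)
  rw [MM_circ f 1 one_ne_zero] at h
  simp only [Complex.ofReal_one, one_mul, smul_eq_mul] at h
  apply mul_left_cancel₀ Complex.I_ne_zero
  linear_combination h

lemma MM_sq (f : ℂ → ℂ) (hf : ∀ z : ℂ, ‖z‖ = 1 → ContinuousAt f z) : MM (fun z => f (z ^ 2)) = MM f := by
  have hint : ∫ θ in (0:ℝ)..(2 * Real.pi), f (Complex.exp (((2 * θ : ℝ) : ℂ) * Complex.I)) =
    (2:ℝ)⁻¹ • ∫ θ in (2 * 0 : ℝ)..(2 * (2 * Real.pi)), f (Complex.exp ((θ : ℂ) * Complex.I)) := 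
    intervalIntegral.integral_comp_mul_left (a := 0) (b := 2 * Real.pi)
      (fun θ : ℝ => f (Complex.exp ((θ : ℂ) * Complex.I))) two_ne_zero
  have h3 := (MM_periodic f).intervalIntegral_add_zsmul_eq 2 0
  unfold MM
  simp only [zsmul_eq_mul, Int.cast_ofNat, zero_add, mul_zero] at h3 hint
  have hc : Continuous (fun θ : ℝ => f (Complex.exp ((θ : ℂ) * Complex.I))) := MM_cont hf
  rw [h3 (fun _ _ => hc.intervalIntegrable _ _)] at hint
  simp only [Complex.real_smul, Complex.ofReal_inv, Complex.ofReal_ofNat] at hint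
  rw [← mul_assoc, inv_mul_cancel₀ two_ne_zero, one_mul] at hint
  rw [← hint]
  apply intervalIntegral.integral_congr
  intro θ _
  simp only
  congr 1
  rw [← Complex.exp_nat_mul]
  push_cast
  congr 1
  ring

lemma MM_half (f : ℂ → ℂ) (hf : ∀ z : ℂ, ‖z‖ = 1 → ContinuousAt f z) (hs : ∀ z, f z⁻¹ = f z) :
    ∫ θ in (0:ℝ)..Real.pi, f (Complex.exp ((θ : ℂ) * Complex.I)) = MM f / 2 := by
  have hint := MM_int hf
  have hpi := Real.pi_pos
  have hi1 : IntervalIntegrable (fun θ : ℝ => f (Complex.exp ((θ : ℂ) * Complex.I))) volume 0 Real.pi :=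
    hint.mono_set (by
      rw [Set.uIcc_of_le (by linarith), Set.uIcc_of_le (by linarith)]
      exact Set.Icc_subset_Icc_right (by linarith))
  have hi2 : IntervalIntegrable (fun θ : ℝ => f (Complex.exp ((θ : ℂ) * Complex.I))) volume Real.pi (2 * Real.pi) :=
    hint.mono_set (by
      rw [Set.uIcc_of_le (by linarith), Set.uIcc_of_le (by linarith)]
      exact Set.Icc_subset_Icc_left (by linarith))
  have h1 := intervalIntegral.integral_add_adjacent_intervals hi1 hi2
  have := intervalIntegral.integral_comp_sub_left (a := 0) (b := Real.pi)
    (fun θ : ℝ => f (Complex.exp ((θ : ℂ) * Complex.I))) (2 * Real.pi)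
  rw [show 2 * Real.pi - Real.pi = Real.pi by ring, sub_zero] at this
  rw [← this] at h1
  have h2 : ∫ θ in (0:ℝ)..Real.pi, f (Complex.exp (((2 * Real.pi - θ : ℝ) : ℂ) * Complex.I))
      = ∫ θ in (0:ℝ)..Real.pi, f (Complex.exp ((θ : ℂ) * Complex.I)) := by
    apply intervalIntegral.integral_congr
    intro θ _
    simp only
    rw [← hs (Complex.exp ((θ : ℂ) * Complex.I))]
    congr 1
    push_cast
    rw [sub_mul, Complex.exp_sub, Complex.exp_two_pi_mul_I, one_div]
  rw [h2] at h1
  unfold MM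
  rw [← h1]; ring

lemma inv_const {q : ℂ} (hq : ‖q‖ < 1) {φ : ℂ → ℂ} (hc : ContinuousOn φ (Metric.ball 0 1))
    (h : ∀ x : ℂ, ‖x‖ < 1 → φ (q * x) = φ x) {x : ℂ} (hx : ‖x‖ < 1) : φ x = φ 0 := by
  have hb : ∀ n : ℕ, ‖q ^ n * x‖ < 1 := fun n => by
    rw [norm_mul, norm_pow]
    calc ‖q‖ ^ n * ‖x‖ ≤ 1 * ‖x‖ := by
          gcongr; exact pow_le_one₀ (norm_nonneg _) hq.le
      _ < 1 := by simpa
  have h1 : ∀ n : ℕ, φ (q ^ n * x) = φ x := by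
    intro n
    induction n with
    | zero => simp
    | succ n ih => rw [pow_succ', mul_assoc, h _ (hb n), ih]
  have h2 : Filter.Tendsto (fun n : ℕ => q ^ n * x) Filter.atTop (nhds 0) := by
    simpa using (tendsto_pow_atTop_nhds_zero_of_norm_lt_one hq).mul_const x
  have h3 : ContinuousAt φ 0 := hc.continuousAt (Metric.ball_mem_nhds _ one_pos)
  have h4 := h3.tendsto.comp h2
  have h5 : (φ ∘ fun n : ℕ => q ^ n * x) = fun _ => φ x := funext h1
  rw [h5] at h4
  exact tendsto_nhds_unique tendsto_const_nhds h4

lemma MM_param {F : ℂ → ℂ → ℂ}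
    (h : ∀ a z : ℂ, ‖a‖ < 1 → ‖z‖ = 1 → ContinuousAt (fun p : ℂ × ℂ => F p.1 p.2) (a, z)) :
    ContinuousOn (fun a => MM (F a)) (Metric.ball 0 1) := by
  rw [continuousOn_iff_continuous_domRestrict]
  unfold MM
  apply intervalIntegral.continuous_parametric_intervalIntegral_of_continuous'
    (f := fun (a : Metric.ball (0:ℂ) 1) (θ : ℝ) => F a (Complex.exp ((θ : ℂ) * Complex.I)))
  rw [continuous_iff_continuousAt]
  rintro ⟨a, θ⟩
  exact ContinuousAt.comp (g := fun p : ℂ × ℂ => F p.1 p.2)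
    (f := fun p : Metric.ball (0:ℂ) 1 × ℝ => ((p.1 : ℂ), Complex.exp ((p.2 : ℂ) * Complex.I)))
    (h _ _ (mem_ball_zero_iff.1 a.2) (nexp θ)) (by fun_prop)

noncomputable def nn (q b z : ℂ) : ℂ := qp q z * qp q (q * z⁻¹) / qp q (b * z⁻¹)

lemma nlt {b z : ℂ} (hb : ‖b‖ < 1) (hz : ‖z‖ = 1) : ‖b * z‖ < 1 := by simpa [hz]
lemma nlt' {b z : ℂ} (hb : ‖b‖ < 1) (hz : ‖z‖ = 1) : ‖b * z⁻¹‖ < 1 := by simpa [hz]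
lemma nz0 {z : ℂ} (hz : ‖z‖ = 1) : z ≠ 0 := by
  rintro rfl; simp at hz

lemma qp_at {q : ℂ} (hq : ‖q‖ < 1) (x : ℂ) : DifferentiableAt ℂ (qp q) x := qp_diff hq x

lemma nn_diff {q : ℂ} (hq : ‖q‖ < 1) {b z : ℂ} (hz : z ≠ 0) (hb : ‖b * z⁻¹‖ < 1) :
    DifferentiableAt ℂ (nn q b) z := by
  have hP := qp_diff hq
  have h0 := qp_ne_zero hq hb
  unfold nn
  have hi : DifferentiableAt ℂ (fun z : ℂ => z⁻¹) z := differentiableAt_inv hz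
  have h1 : DifferentiableAt ℂ (fun z => qp q (q * z⁻¹)) z :=
    DifferentiableAt.comp z (hP _) (hi.const_mul q)
  have h2 : DifferentiableAt ℂ (fun z => qp q (b * z⁻¹)) z :=
    DifferentiableAt.comp z (hP _) (hi.const_mul b)
  exact ((hP z).mul h1).div h2 h0

lemma nn_cont {q : ℂ} (hq : ‖q‖ < 1) {b : ℂ} (hb : ‖b‖ < 1) :
    ∀ z : ℂ, ‖z‖ = 1 → ContinuousAt (nn q b) z := fun z hz =>
  (nn_diff hq (nz0 hz) (nlt' hb hz)).continuousAt

lemma nn_shift {q : ℂ} (hq0 : q ≠ 0) (hq : ‖q‖ < 1) {b : ℂ} (hb : ‖b‖ < 1) :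
    MM (fun z => nn q (q * b) (q * z)) = MM (nn q (q * b)) := by
  apply MM_shift hq0 hq
  intro z h1 h2
  have hqp : 0 < ‖q‖ := norm_pos_iff.2 hq0
  have hz : 0 < ‖z‖ := hqp.trans_le h1
  apply nn_diff hq (norm_pos_iff.1 hz)
  rw [norm_mul, norm_mul, norm_inv, ← div_eq_mul_inv, div_lt_one hz]
  nlinarith [norm_nonneg b]

lemma nn_cont_shift {q : ℂ} (hq0 : q ≠ 0) (hq : ‖q‖ < 1) {b : ℂ} (hb : ‖b‖ < 1) :
    ∀ z : ℂ, ‖z‖ = 1 → ContinuousAt (fun z => nn q (q * b) (q * z)) z := by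
  intro z hz
  have : ContinuousAt (nn q (q * b)) (q * z) := by
    apply (nn_diff hq (mul_ne_zero hq0 (nz0 hz)) ?_).continuousAt
    have : q * b * (q * z)⁻¹ = b * z⁻¹ := by
      have := nz0 hz
      field_simp
    rw [this]; exact nlt' hb hz
  exact ContinuousAt.comp (f := fun z => q * z) this (by fun_prop)

lemma nn_rec {q : ℂ} (hq0 : q ≠ 0) (hq : ‖q‖ < 1) {b : ℂ} (hb : ‖b‖ < 1) :
    MM (nn q b) = (1 - b) * MM (nn q (q * b)) := by
  have h : MM (nn q b) = MM (fun z => nn q (q * b) z + (-b) * nn q (q * b) (q * z)) := by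
    apply MM_congr
    intro z hz
    have hz0 := nz0 hz
    unfold nn
    have hd := qp_ne_zero hq (nlt' hb hz)
    have e1 : q * (q * z)⁻¹ = z⁻¹ := by field_simp
    have e2 : q * b * (q * z)⁻¹ = b * z⁻¹ := by field_simp
    have e3 : q * b * z⁻¹ = q * (b * z⁻¹) := by ring
    rw [e1, e2, e3]
    rw [qp_rec hq (b * z⁻¹)] at hd ⊢
    rw [qp_rec hq z, qp_rec hq z⁻¹]
    have hd1 := left_ne_zero_of_mul hd
    have hd2 := right_ne_zero_of_mul hd
    generalize qp q (q * (b * z⁻¹)) = A at *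
    generalize qp q (q * z⁻¹) = B at *
    generalize qp q (q * z) = C at *
    have hzb : z - b ≠ 0 := by
      intro h
      apply hd1
      rw [show b = z by linear_combination -h, mul_inv_cancel₀ hz0, sub_self]
    field_simp
    ring
  have hqb : ‖q * b‖ < 1 := by
    rw [norm_mul]; nlinarith [norm_nonneg q, norm_nonneg b]
  rw [h, MM_add (g := fun z => (-b) * nn q (q * b) (q * z)) (nn_cont hq hqb) (fun z hz => continuousAt_const.mul (nn_cont_shift hq0 hq hb z hz)),
    MM_smul, nn_shift hq0 hq hb]
  ring

lemma nn_val {q : ℂ} (hq0 : q ≠ 0) (hq : ‖q‖ < 1) : MM (nn q 0) = 2 * Real.pi / qp q q := by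
  have hc : ContinuousOn (fun b => MM (nn q b) / qp q b) (Metric.ball 0 1) := by
    apply ContinuousOn.div
    · apply MM_param
      intro a z ha hz
      have hz0 := nz0 hz
      have hP := qp_cont hq
      unfold nn
      have hi : ContinuousAt (fun p : ℂ × ℂ => p.2⁻¹) (a, z) := continuousAt_snd.inv₀ hz0
      have h1 : ContinuousAt (fun p : ℂ × ℂ => qp q (q * p.2⁻¹)) (a, z) :=
        ContinuousAt.comp (g := qp q) hP.continuousAt (continuousAt_const.mul hi)
      have h2 : ContinuousAt (fun p : ℂ × ℂ => qp q (p.1 * p.2⁻¹)) (a, z) :=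
        ContinuousAt.comp (g := qp q) hP.continuousAt (continuousAt_fst.mul hi)
      have h3 : ContinuousAt (fun p : ℂ × ℂ => qp q p.2) (a, z) :=
        ContinuousAt.comp (g := qp q) hP.continuousAt continuousAt_snd
      exact (h3.mul h1).div h2 (qp_ne_zero hq (nlt' ha hz))
    · exact (qp_cont hq).continuousOn
    · intro x hx
      exact qp_ne_zero hq (mem_ball_zero_iff.1 hx)
  have h := inv_const hq hc (fun x hx => by
    have h1 := qp_ne_zero hq hx
    rw [nn_rec hq0 hq hx]
    rw [qp_rec hq x] at h1 ⊢
    have := left_ne_zero_of_mul h1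
    rw [mul_div_mul_left _ _ this]) hq
  simp only [qp_zero, div_one] at h
  rw [← h]
  congr 1
  have : MM (nn q q) = MM (qp q) := by
    apply MM_congr
    intro z hz
    have := qp_ne_zero hq (nlt' hq hz)
    unfold nn
    rw [mul_div_assoc, div_self this, mul_one]
  rw [this, MM_center (qp_diff hq), qp_zero, mul_one]

noncomputable def gg (q a b z : ℂ) : ℂ := qp q (z ^ 2) * qp q (z⁻¹ ^ 2) /
  (qp q (a * z) * qp q (a * z⁻¹) * (qp q (b * z) * qp q (b * z⁻¹)))

lemma gg_zero {q : ℂ} (hq0 : q ≠ 0) (hq : ‖q‖ < 1) :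
    MM (gg q 0 0) = 4 * Real.pi / qp q q := by
  have h0 : ‖(0:ℂ)‖ < 1 := by simp
  have hP := qp_cont hq
  have h1 : MM (gg q 0 0) = MM (fun z => qp q z * qp q z⁻¹) := by
    rw [← MM_sq (fun z => qp q z * qp q z⁻¹)]
    · apply MM_congr
      intro z hz
      simp [gg, qp_zero]
    · intro z hz
      exact hP.continuousAt.mul (ContinuousAt.comp (g := qp q) hP.continuousAt
        (continuousAt_id.inv₀ (nz0 hz)))
  have h2 : MM (fun z => qp q z * qp q z⁻¹)
      = MM (fun z => nn q (q * 0) z + nn q (q * 0) (q * z)) := by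
    apply MM_congr
    intro z hz
    have hz0 := nz0 hz
    have e1 : q * (q * z)⁻¹ = z⁻¹ := by field_simp
    simp only [nn, mul_zero, zero_mul, qp_zero, div_one, e1]
    rw [qp_rec hq z, qp_rec hq z⁻¹]
    field_simp
    ring
  rw [h1, h2, MM_add (nn_cont hq (by simp)) (nn_cont_shift hq0 hq h0), nn_shift hq0 hq h0,
    mul_zero, nn_val hq0 hq]
  ring

lemma gg_contAt {q : ℂ} (hq : ‖q‖ < 1) {b : ℂ} (hb : ‖b‖ < 1) (a z : ℂ) (ha : ‖a‖ < 1)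
    (hz : ‖z‖ = 1) : ContinuousAt (fun p : ℂ × ℂ => gg q p.1 b p.2) (a, z) := by
  have hz0 := nz0 hz
  have hP := qp_cont hq
  unfold gg
  have hi : ContinuousAt (fun p : ℂ × ℂ => p.2⁻¹) (a, z) := continuousAt_snd.inv₀ hz0
  have hs : ContinuousAt (fun p : ℂ × ℂ => p.2) (a, z) := continuousAt_snd
  have hf : ContinuousAt (fun p : ℂ × ℂ => p.1) (a, z) := continuousAt_fst
  have key : ∀ f : ℂ × ℂ → ℂ, ContinuousAt f (a, z) → ContinuousAt (fun p => qp q (f p)) (a, z) :=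
    fun f hf => ContinuousAt.comp (g := qp q) hP.continuousAt hf
  refine ContinuousAt.div ((key _ (hs.pow 2)).mul (key _ (hi.pow 2)))
    (((key _ (hf.mul hs)).mul (key _ (hf.mul hi))).mul
      ((key _ (continuousAt_const.mul hs)).mul (key _ (continuousAt_const.mul hi)))) ?_
  exact mul_ne_zero (mul_ne_zero (qp_ne_zero hq (nlt ha hz)) (qp_ne_zero hq (nlt' ha hz)))
    (mul_ne_zero (qp_ne_zero hq (nlt hb hz)) (qp_ne_zero hq (nlt' hb hz)))

lemma gg_cont {q : ℂ} (hq : ‖q‖ < 1) {a b : ℂ} (ha : ‖a‖ < 1) (hb : ‖b‖ < 1) :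
    ∀ z : ℂ, ‖z‖ = 1 → ContinuousAt (gg q a b) z := fun z hz =>
  ContinuousAt.comp (g := fun p : ℂ × ℂ => gg q p.1 b p.2) (f := fun z => (a, z))
    (gg_contAt hq hb a z ha hz) (by fun_prop)

noncomputable def GG (q u a b z : ℂ) : ℂ := (z - z⁻¹) * (qp q (q * z ^ 2) * qp q (q * z⁻¹ ^ 2)) /
  (qp q (a * u * z) * qp q (a * u * z⁻¹) * (qp q (b * u * z) * qp q (b * u * z⁻¹)))

lemma GG_diff {q u a b : ℂ} (hu0 : u ≠ 0) (hu1 : ‖u‖ < 1) (hq : ‖q‖ < 1) (ha : ‖a‖ < 1)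
    (hb : ‖b‖ < 1) (z : ℂ) (h1 : ‖u‖ ≤ ‖z‖) (h2 : ‖z‖ ≤ 1) :
    DifferentiableAt ℂ (GG q u a b) z := by
  have hup : 0 < ‖u‖ := norm_pos_iff.2 hu0
  have hzp : 0 < ‖z‖ := hup.trans_le h1
  have hz0 := norm_pos_iff.1 hzp
  have hP := qp_diff hq
  unfold GG
  have hi : DifferentiableAt ℂ (fun z : ℂ => z⁻¹) z := differentiableAt_inv hz0
  have hs : DifferentiableAt ℂ (fun z : ℂ => z) z := differentiableAt_id
  have key : ∀ f : ℂ → ℂ, DifferentiableAt ℂ f z → DifferentiableAt ℂ (fun p => qp q (f p)) z :=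
    fun f hf => DifferentiableAt.comp z (hP _) hf
  have n1 : ∀ a : ℂ, ‖a‖ < 1 → qp q (a * u * z) ≠ 0 := fun a ha => by
    apply qp_ne_zero hq
    rw [norm_mul, norm_mul]
    have : ‖a‖ * ‖u‖ < 1 := by nlinarith [norm_nonneg a]
    nlinarith [norm_nonneg a, mul_nonneg (norm_nonneg a) hup.le]
  have n2 : ∀ a : ℂ, ‖a‖ < 1 → qp q (a * u * z⁻¹) ≠ 0 := fun a ha => by
    apply qp_ne_zero hq
    rw [norm_mul, norm_mul, norm_inv, ← div_eq_mul_inv, div_lt_one hzp]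
    nlinarith [norm_nonneg a]
  refine DifferentiableAt.div ((hs.sub hi).mul
    ((key _ ((hs.pow 2).const_mul q)).mul (key _ ((hi.pow 2).const_mul q))))
    (((key _ (hs.const_mul _)).mul (key _ (hi.const_mul _))).mul
      ((key _ (hs.const_mul _)).mul (key _ (hi.const_mul _)))) ?_
  exact mul_ne_zero (mul_ne_zero (n1 a ha) (n2 a ha)) (mul_ne_zero (n1 b hb) (n2 b hb))

lemma GG_zero {q u a b : ℂ} (hu0 : u ≠ 0) (hu1 : ‖u‖ < 1) (hq : ‖q‖ < 1) (ha : ‖a‖ < 1)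
    (hb : ‖b‖ < 1) : MM (fun z => GG q u a b (u * z)) = 0 := by
  rw [MM_shift hu0 hu1 (GG_diff hu0 hu1 hq ha hb)]
  have h1 := MM_inv (GG q u a b)
  have h2 : MM (fun z => GG q u a b z⁻¹) = MM (fun z => (-1) * GG q u a b z) := by
    apply MM_congr
    intro z hz
    simp only [GG, inv_inv]
    ring
  rw [h2, MM_smul] at h1
  have h3 : 2 * MM (GG q u a b) = 0 := by linear_combination -h1
  simpa using h3

lemma GG_eq {q u a b : ℂ} (hu : u ^ 2 = q) (hu0 : u ≠ 0) (hq : ‖q‖ < 1)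
    (ha : ‖a‖ < 1) (hb : ‖b‖ < 1) (z : ℂ) (hz : ‖z‖ = 1) :
    GG q u a b (u * z) = -u⁻¹ * (z⁻¹ * (1 - z⁻¹ ^ 2) * (1 - a * z) * (1 - b * z)) *
      ((qp q (q * z ^ 2) * qp q (q * z⁻¹ ^ 2)) /
        (qp q (a * z) * qp q (a * z⁻¹) * (qp q (b * z) * qp q (b * z⁻¹)))) := by
  have hz0 := nz0 hz
  have na := qp_ne_zero hq (nlt ha hz)
  have nb := qp_ne_zero hq (nlt hb hz)
  have na' := qp_ne_zero hq (nlt' ha hz)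
  have nb' := qp_ne_zero hq (nlt' hb hz)
  unfold GG
  have e1 : q * (u * z) ^ 2 = q * (q * z ^ 2) := by rw [mul_pow, hu]
  have e2 : q * (u * z)⁻¹ ^ 2 = z⁻¹ ^ 2 := by rw [← hu]; field_simp
  have e3 : ∀ a : ℂ, a * u * (u * z) = q * (a * z) := fun a => by rw [← hu]; ring
  have e4 : ∀ a : ℂ, a * u * (u * z)⁻¹ = a * z⁻¹ := fun a => by field_simp
  rw [e1, e2, e3, e3, e4, e4, qp_rec hq (z⁻¹ ^ 2), qp_rec hq (q * z ^ 2)]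
  rw [qp_rec hq (a * z)] at na ⊢
  rw [qp_rec hq (b * z)] at nb ⊢
  have na1 := left_ne_zero_of_mul na
  have na2 := right_ne_zero_of_mul na
  have nb1 := left_ne_zero_of_mul nb
  have nb2 := right_ne_zero_of_mul nb
  generalize qp q (q * (a * z)) = A at *
  generalize qp q (q * (b * z)) = B at *
  generalize qp q (a * z⁻¹) = A' at *
  generalize qp q (b * z⁻¹) = B' at *
  generalize qp q (q * (q * z ^ 2)) = C at *
  generalize qp q (q * z⁻¹ ^ 2) = D at *
  subst hu
  generalize 1 - a * z = α at *
  generalize 1 - b * z = β at *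
  field_simp
  ring

lemma gg_orth {q u a b : ℂ} (hu : u ^ 2 = q) (hu0 : u ≠ 0) (hu1 : ‖u‖ < 1) (hq : ‖q‖ < 1)
    (ha : ‖a‖ < 1) (hb : ‖b‖ < 1) : MM (fun z => gg q a b z * (z + z⁻¹ - a - b)) = 0 := by
  have h0 := GG_zero hu0 hu1 hq ha hb
  have h0' := MM_inv (fun z => GG q u a b (u * z))
  have hc : ∀ z : ℂ, ‖z‖ = 1 → ContinuousAt (fun z => GG q u a b (u * z)) z := fun z hz =>
    ContinuousAt.comp (g := GG q u a b) (f := fun z => u * z)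
      (GG_diff hu0 hu1 hq ha hb (u * z) (by simp [hz]) (by simp [hz, hu1.le])).continuousAt
      (by fun_prop)
  have hc' : ∀ z : ℂ, ‖z‖ = 1 → ContinuousAt (fun z => GG q u a b (u * z⁻¹)) z := fun z hz =>
    ContinuousAt.comp (g := fun z => GG q u a b (u * z)) (f := fun z => z⁻¹)
      (hc z⁻¹ (by simp [hz])) (continuousAt_inv₀ (nz0 hz))
  have h1 : MM (fun z => gg q a b z * (z + z⁻¹ - a - b))
      = MM (fun z => (-u) * (GG q u a b (u * z) + GG q u a b (u * z⁻¹))) := by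
    apply MM_congr
    intro z hz
    have hz0 := nz0 hz
    rw [GG_eq hu hu0 hq ha hb z hz, GG_eq hu hu0 hq ha hb z⁻¹ (by simp [hz])]
    unfold gg
    rw [qp_rec hq (z ^ 2), qp_rec hq (z⁻¹ ^ 2), inv_inv]
    have na := qp_ne_zero hq (nlt ha hz)
    have nb := qp_ne_zero hq (nlt hb hz)
    have na' := qp_ne_zero hq (nlt' ha hz)
    have nb' := qp_ne_zero hq (nlt' hb hz)
    generalize qp q (a * z) = A at *
    generalize qp q (b * z) = B at *
    generalize qp q (a * z⁻¹) = A' at *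
    generalize qp q (b * z⁻¹) = B' at *
    generalize qp q (q * z ^ 2) = C at *
    generalize qp q (q * z⁻¹ ^ 2) = D at *
    field_simp
    ring
  rw [h1, MM_smul, MM_add hc hc', h0', h0]
  simp

lemma gg_rec {q u a b : ℂ} (hu : u ^ 2 = q) (hu0 : u ≠ 0) (hu1 : ‖u‖ < 1) (hq : ‖q‖ < 1)
    (ha : ‖a‖ < 1) (hb : ‖b‖ < 1) : MM (gg q (q * a) b) = (1 - a * b) * MM (gg q a b) := by
  have h : MM (gg q (q * a) b)
      = MM (fun z => (1 - a * b) * gg q a b z + (-a) * (gg q a b z * (z + z⁻¹ - a - b))) := by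
    apply MM_congr
    intro z hz
    have hz0 := nz0 hz
    unfold gg
    rw [mul_assoc q a, mul_assoc q a]
    have na := qp_ne_zero hq (nlt ha hz)
    have nb := qp_ne_zero hq (nlt hb hz)
    have na' := qp_ne_zero hq (nlt' ha hz)
    have nb' := qp_ne_zero hq (nlt' hb hz)
    rw [qp_rec hq (a * z)] at na ⊢
    rw [qp_rec hq (a * z⁻¹)] at na' ⊢
    have na1 := left_ne_zero_of_mul na
    have na2 := right_ne_zero_of_mul na
    have nb1 := left_ne_zero_of_mul na'
    have nb2 := right_ne_zero_of_mul na'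
    generalize qp q (q * (a * z)) = A at *
    generalize qp q (q * (a * z⁻¹)) = A' at *
    generalize qp q (b * z) = B at *
    generalize qp q (b * z⁻¹) = B' at *
    generalize qp q (z ^ 2) = C at *
    generalize qp q (z⁻¹ ^ 2) = D at *
    have hza : z - a ≠ 0 := by
      intro h
      apply nb1
      rw [show a = z by linear_combination -h, mul_inv_cancel₀ hz0, sub_self]
    field_simp
    ring
  have hg := gg_cont hq ha hb
  have hl : ∀ z : ℂ, ‖z‖ = 1 → ContinuousAt (fun z : ℂ => z + z⁻¹ - a - b) z := fun z hz =>
    ((continuousAt_id.add (continuousAt_inv₀ (nz0 hz))).sub continuousAt_const).sub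
      continuousAt_const
  rw [h, MM_add (f := fun z => (1 - a * b) * gg q a b z)
    (g := fun z => (-a) * (gg q a b z * (z + z⁻¹ - a - b)))
    (fun z hz => continuousAt_const.mul (hg z hz))
    (fun z hz => continuousAt_const.mul ((hg z hz).mul (hl z hz))), MM_smul, MM_smul,
    gg_orth hu hu0 hu1 hq ha hb]
  ring

lemma gg_step {q u a b : ℂ} (hu : u ^ 2 = q) (hu0 : u ≠ 0) (hu1 : ‖u‖ < 1) (hq : ‖q‖ < 1)
    (ha : ‖a‖ < 1) (hb : ‖b‖ < 1) : MM (gg q a b) * qp q (a * b) = MM (gg q 0 b) := by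
  have hc : ContinuousOn (fun a => MM (gg q a b) * qp q (a * b)) (Metric.ball 0 1) := by
    apply ContinuousOn.mul
    · exact MM_param (F := fun a z => gg q a b z) (gg_contAt hq hb)
    · have := qp_cont hq
      exact Continuous.continuousOn (by fun_prop)
  have h := inv_const hq hc (fun x hx => by
    rw [gg_rec hu hu0 hu1 hq hx hb, qp_rec hq (x * b), mul_assoc q x b]
    ring) ha
  simpa [qp_zero] using h

lemma gg_symm (q a b : ℂ) : gg q a b = gg q b a := by
  funext z; unfold gg; ring

theorem integral_step_five (q u a b : ℂ) (hq0 : 0 < ‖q‖) (hq : ‖q‖ < 1) (hu : u ^ 2 = q)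
    (ha : ‖a‖ < 1) (hb : ‖b‖ < 1) :
    ∫ θ in (0:ℝ)..Real.pi,
      (hh q θ 1 * hh q θ (-1) * hh q θ u * hh q θ (-u)) / (hh q θ a * hh q θ b)
      = 2 * (Real.pi : ℂ) / (qp q q * qp q (a * b)) := by
  have hq0' : q ≠ 0 := norm_pos_iff.1 hq0
  have hu0 : u ≠ 0 := by rintro rfl; apply hq0'; rw [← hu]; simp
  have hu1 : ‖u‖ < 1 := by
    by_contra h
    have h1 : 1 ≤ ‖u‖ ^ 2 := one_le_pow₀ (not_lt.1 h)
    rw [← norm_pow, hu] at h1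
    linarith
  have h0 : ‖(0:ℂ)‖ < 1 := by simp
  have hE : ∫ θ in (0:ℝ)..Real.pi,
      (hh q θ 1 * hh q θ (-1) * hh q θ u * hh q θ (-u)) / (hh q θ a * hh q θ b)
      = ∫ θ in (0:ℝ)..Real.pi, gg q a b (Complex.exp ((θ : ℂ) * Complex.I)) := by
    apply intervalIntegral.integral_congr
    intro θ _
    simp only [hh, gg]
    rw [Complex.exp_neg, ← qp_quad hq hu (Complex.exp ((θ : ℂ) * Complex.I)),
      ← qp_quad hq hu (Complex.exp ((θ : ℂ) * Complex.I))⁻¹]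
    simp only [one_mul, neg_mul]
    congr 1
    ring
  have s1 := gg_step hu hu0 hu1 hq ha hb
  have s2 := gg_step hu hu0 hu1 hq hb h0
  rw [mul_zero, qp_zero, mul_one, gg_symm q b 0] at s2
  rw [s2, gg_zero hq0' hq] at s1
  have hab : ‖a * b‖ < 1 := by
    rw [norm_mul]; nlinarith [norm_nonneg a, norm_nonneg b]
  have n1 := qp_ne_zero hq hab
  have n2 := qp_ne_zero hq hq
  rw [hE, MM_half _ (gg_cont hq ha hb) (fun z => by unfold gg; rw [inv_inv]; ring),
    eq_div_of_mul_eq n1 s1]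
  field_simp
  ring
end

section
/- Let q be a complex number with |q| < 1 and let a, b, c, d, e be complex numbers (with all the denominators below nonzero and |q²a²/(bcde)| small enough that the series converge absolutely). Then Σ_{n=0}^∞ [(1 - a q^{2n})/(1 - a)] · [(a; q)_n (b; q)_n (c; q)_n (d; q)_n (e; q)_n / ((q; q)_n (qa/b; q)_n (qa/c; q)_n (qa/d; q)_n (qa/e; q)_n)] (-q²a²/(bcde))^n q^{n(n-1)/2} = [(qa; q)_∞ (qa/(de); q)_∞ / ((qa/d; q)_∞ (qa/e; q)_∞)] · Σ_{m=0}^∞ [(qa/(bc); q)_m (d; q)_m (e; q)_m / ((q; q)_m (qa/b; q)_m (qa/c; q)_m)] (qa/(de))^m. -/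
open Complex MeasureTheory

lemma qpn_zero (q x : ℂ) : qpn q x 0 = 1 := by simp [qpn]

lemma qpn_succ (q x : ℂ) (n : ℕ) : qpn q x (n+1) = qpn q x n * (1 - x * q ^ n) := by
  simp [qpn, Finset.prod_range_succ]

lemma qpn_add (q x : ℂ) (m n : ℕ) : qpn q x (m+n) = qpn q x m * qpn q (x * q ^ m) n := by
  simp only [qpn, Finset.prod_range_add]
  congr 1
  refine Finset.prod_congr rfl fun i _ => ?_
  rw [pow_add]; ring

lemma qpn_succ' (q x : ℂ) (n : ℕ) : qpn q x (n+1) = (1 - x) * qpn q (x * q) n := by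
  rw [add_comm, qpn_add]; simp [qpn]

lemma one_sub_ne (q : ℂ) (hq : ‖q‖ < 1) (n : ℕ) : 1 - q * q ^ n ≠ 0 := by
  intro h
  have h1 : q ^ (n+1) = 1 := by rw [pow_succ]; linear_combination -h
  have h2 : ‖q‖ ^ (n+1) = 1 := by rw [← norm_pow, h1, norm_one]
  have h3 : ‖q‖ ^ (n+1) < 1 := pow_lt_one₀ (norm_nonneg _) hq (by omega)
  linarith

lemma qpn_q_ne (q : ℂ) (hq : ‖q‖ < 1) (n : ℕ) : qpn q q n ≠ 0 := by
  rw [qpn, Finset.prod_ne_zero_iff]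
  intro i _
  exact one_sub_ne q hq i

lemma qpn_rev (q y z : ℂ) (k : ℕ) (hq : q ≠ 0) (h : y * z * q ^ k = q) :
    qpn q y k = (-y) ^ k * q ^ (k.choose 2) * qpn q z k := by
  have e1 : (-y) ^ k * q ^ (k.choose 2) = ∏ i ∈ Finset.range k, (-y * q ^ i) := by
    rw [Finset.prod_mul_distrib, Finset.prod_const, Finset.card_range,
      Finset.prod_pow_eq_pow_sum, Finset.sum_range_id, Nat.choose_two_right]
  rw [e1, qpn, qpn, ← Finset.prod_range_reflect (fun i => 1 - z * q ^ i) k,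
    ← Finset.prod_mul_distrib]
  refine Finset.prod_congr rfl fun i hi => ?_
  have hi' := Finset.mem_range.mp hi
  obtain ⟨m, rfl⟩ : ∃ m, k = i + 1 + m := ⟨k - (i+1), by omega⟩
  have e2 : i + 1 + m - 1 - i = m := by omega
  rw [e2]
  have : y * z * q ^ (i + m) = 1 := by
    apply mul_right_cancel₀ hq
    rw [one_mul]; nth_rewrite 3 [← h]; ring
  rw [pow_add] at this
  linear_combination -this

noncomputable def tS (q A B x : ℂ) (j k : ℕ) : ℂ :=
  qpn q q (j+k) / (qpn q q j * qpn q q k) * qpn q A j * qpn q B j * qpn q x k *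
    qpn q (A*B*x*q^j) k * x ^ j

noncomputable def gS (q A B x : ℂ) (j k : ℕ) : ℂ :=
  - (q ^ k * (qpn q q (j+k) / (qpn q q j * qpn q q k)) * qpn q A (j+1) * qpn q B (j+1) * qpn q x k *
    qpn q (A*B*x*q^j) k * x ^ (j+1))

lemma stepS0 (q A B x : ℂ) (hq : ‖q‖ < 1) (k : ℕ) :
    tS q A B x 0 (k+1) - (1 - A*x*q^k) * (1 - B*x*q^k) * tS q A B x 0 k = gS q A B x 0 k := by
  have h1 := qpn_q_ne q hq k
  have h3 := one_sub_ne q hq k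
  simp only [tS, gS, zero_add, qpn_zero, qpn_succ, pow_zero, mul_one, one_mul]
  generalize qpn q q k = u at *
  generalize qpn q x k = v at *
  generalize qpn q _ k = w at *
  generalize q ^ k = K at *
  field_simp
  ring

lemma stepS (q A B x : ℂ) (hq : ‖q‖ < 1) (j k : ℕ) :
    tS q A B x (j+1) (k+1) - (1 - A*x*q^(j+1+k)) * (1 - B*x*q^(j+1+k)) * tS q A B x (j+1) k
      = gS q A B x (j+1) k - gS q A B x j (k+1) := by
  have h1 := qpn_q_ne q hq k
  have h2 := qpn_q_ne q hq j
  have h3 := one_sub_ne q hq k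
  have h4 := one_sub_ne q hq j
  have e1 : j + 1 + (k+1) = (j+k+1)+1 := by ring
  have e2 : j + 1 + k = (j+k)+1 := by ring
  have e3 : j + (k + 1) = (j+k)+1 := by ring
  simp only [tS, gS, e1, e2, e3]
  rw [qpn_succ' q (A*B*x*q^j) k, qpn_succ q (A*B*x*q^(j+1)) k, qpn_succ q q (j+k+1),
    qpn_succ q q j, qpn_succ q q k, qpn_succ q x k, qpn_succ q A (j+1), qpn_succ q B (j+1)]
  have e4 : A*B*x*q^j*q = A*B*x*q^(j+1) := by ring
  rw [e4]
  generalize qpn q q k = u at *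
  generalize qpn q q j = u' at *
  generalize qpn q x k = v at *
  generalize qpn q _ k = w at *
  generalize qpn q A _ = w1 at *
  generalize qpn q B _ = w2 at *
  generalize qpn q q _ = w3 at *
  simp only [pow_succ, pow_add]
  generalize q ^ k = K at *
  generalize q ^ j = J at *
  generalize x ^ j = X at *
  field_simp
  ring

lemma partS (q A B x : ℂ) (hq : ‖q‖ < 1) (n j : ℕ) (hj : j ≤ n) :
    ∑ i ∈ Finset.range (j+1), (tS q A B x i (n+1-i) -
      (1 - A*x*q^n) * (1 - B*x*q^n) * tS q A B x i (n-i)) = gS q A B x j (n-j) := by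
  induction j with
  | zero => simpa using stepS0 q A B x hq n
  | succ j ih =>
    rw [Finset.sum_range_succ, ih (by omega)]
    obtain ⟨k, rfl⟩ : ∃ k, n = j + 1 + k := ⟨n - (j+1), by omega⟩
    have := stepS q A B x hq j k
    have e1 : j + 1 + k + 1 - (j+1) = k + 1 := by omega
    have e2 : j + 1 + k - (j+1) = k := by omega
    have e3 : j + 1 + k - j = k + 1 := by omega
    rw [e1, e2, e3, this]; ring

lemma saal (q A B x : ℂ) (hq : ‖q‖ < 1) (n : ℕ) :
    ∑ i ∈ Finset.range (n+1), tS q A B x i (n-i) = qpn q (A*x) n * qpn q (B*x) n := by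
  induction n with
  | zero => simp [tS, qpn]
  | succ n ih =>
    have h := partS q A B x hq n n le_rfl
    rw [Finset.sum_sub_distrib, ← Finset.mul_sum, ih] at h
    rw [Finset.sum_range_succ, qpn_succ, qpn_succ]
    have h2 : tS q A B x (n+1) (n+1-(n+1)) = - gS q A B x n (n-n) := by
      have := qpn_q_ne q hq n
      have := qpn_q_ne q hq (n+1)
      simp only [tS, gS, Nat.sub_self, qpn_zero, add_zero]
      field_simp
    rw [h2]
    linear_combination h

open Filter Topology in
lemma summ_geo (q : ℂ) (hq : ‖q‖ < 1) (x : ℂ) : Summable fun i : ℕ => ‖x * q ^ i‖ := by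
  simp only [norm_mul, norm_pow]
  exact (summable_geometric_of_lt_one (norm_nonneg _) hq).mul_left _

lemma qpn_bdd (q : ℂ) (hq : ‖q‖ < 1) (R : ℝ) :
    ∃ M : ℝ, 1 ≤ M ∧ ∀ x : ℂ, ‖x‖ ≤ R → ∀ n, ‖qpn q x n‖ ≤ M := by
  refine ⟨Real.exp (|R| * (1 - ‖q‖)⁻¹), Real.one_le_exp
    (mul_nonneg (abs_nonneg _) (inv_nonneg.mpr (by linarith))), fun x hx n => ?_⟩
  have h1 := Finset.norm_prod_one_add_sub_one_le (Finset.range n) (fun i => -(x * q ^ i))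
  have h2 : ∑ i ∈ Finset.range n, ‖-(x * q ^ i)‖ ≤ |R| * (1 - ‖q‖)⁻¹ := by
    simp only [norm_neg, norm_mul, norm_pow]
    rw [← Finset.mul_sum]
    apply mul_le_mul (hx.trans (le_abs_self _)) _ (Finset.sum_nonneg fun i _ => by positivity)
      (abs_nonneg _)
    rw [← tsum_geometric_of_lt_one (norm_nonneg _) hq]
    exact (summable_geometric_of_lt_one (norm_nonneg _) hq).sum_le_tsum _
      (fun i _ => by positivity)
  have h3 := Real.exp_le_exp.mpr h2
  have h4 : ∏ i ∈ Finset.range n, (1 + -(x * q ^ i)) = qpn q x n := by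
    simp [qpn, sub_eq_add_neg]
  rw [h4] at h1
  have h5 := norm_sub_norm_le (qpn q x n) 1
  rw [norm_one] at h5
  linarith

open Filter Topology in
lemma qpn_tendsto (q : ℂ) (hq : ‖q‖ < 1) (x : ℂ) :
    Tendsto (fun n => qpn q x n) atTop (𝓝 (qp q x)) := by
  have h : Multipliable fun i : ℕ => (1 + -(x * q ^ i)) := by
    apply multipliable_one_add_of_summable
    simpa using summ_geo q hq x
  have := h.hasProd.tendsto_prod_nat
  simpa [qpn, qp, sub_eq_add_neg] using this

open Filter Topology in
lemma qp_shift (q : ℂ) (hq : ‖q‖ < 1) (x : ℂ) (n : ℕ) :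
    qp q x = qpn q x n * qp q (x * q ^ n) := by
  have h1 := (qpn_tendsto q hq (x * q ^ n)).const_mul (qpn q x n)
  have h2 := (tendsto_add_atTop_iff_nat n).mpr (qpn_tendsto q hq x)
  refine tendsto_nhds_unique h2 (h1.congr fun m => ?_)
  rw [← qpn_add, add_comm]

open Filter Topology in
lemma qpn_lower (q : ℂ) (hq : ‖q‖ < 1) (y : ℂ) (h : ∀ n, qpn q y n ≠ 0) (h' : qp q y ≠ 0) :
    ∃ m : ℝ, 0 < m ∧ ∀ N k, m ≤ ‖qpn q (y * q ^ N) k‖ := by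
  have h1 := ((qpn_tendsto q hq y).inv₀ h').norm
  obtain ⟨B, hB⟩ := h1.bddAbove_range
  have hB' : ∀ n, ‖(qpn q y n)⁻¹‖ ≤ B := fun n => hB ⟨n, rfl⟩
  obtain ⟨M, hM1, hM⟩ := qpn_bdd q hq ‖y‖
  have hBpos : 0 < B := lt_of_lt_of_le (by simpa using h 0) (hB' 0)
  have hMpos : 0 < M := by linarith
  refine ⟨(B * M)⁻¹, by positivity, fun N k => ?_⟩
  have e := qpn_add q y N k
  have hne : qpn q (y * q ^ N) k ≠ 0 := fun h0 => h (N + k) (by rw [e, h0, mul_zero])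
  have e2 : (qpn q (y * q ^ N) k)⁻¹ = qpn q y N * (qpn q y (N+k))⁻¹ := by
    rw [e]; have := h N; field_simp
  have h3 : ‖(qpn q (y * q ^ N) k)⁻¹‖ ≤ B * M := by
    rw [e2, norm_mul, mul_comm]
    exact mul_le_mul (hB' _) (hM _ le_rfl _) (norm_nonneg _) hBpos.le
  rw [norm_inv] at h3
  exact inv_le_of_inv_le₀ (norm_pos_iff.mpr hne) h3

lemma qp_q_ne (q : ℂ) (hq : ‖q‖ < 1) : qp q q ≠ 0 := by
  have := tprod_one_add_ne_zero_of_summable (f := fun i : ℕ => -(q * q ^ i))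
    (fun i => by simpa [sub_eq_add_neg] using one_sub_ne q hq i)
    (by simpa using summ_geo q hq q)
  simpa [qp, sub_eq_add_neg] using this

noncomputable def wv (q y : ℂ) : ℕ → ℂ
  | 0 => 1
  | k+1 => (1 - y * q ^ (2*k+1)) * qpn q y k

noncomputable def sv (q D E z : ℂ) (k : ℕ) : ℂ :=
  wv q (z*D*E) k * (qpn q D k * qpn q E k) / (qpn q q k * qpn q (z*E) k * qpn q (z*D) k) *
    (-z) ^ k * q ^ (k.choose 2)

lemma ch2 (k : ℕ) : (k+1).choose 2 = k.choose 2 + k := by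
  rw [Nat.choose_succ_succ' k 1]; simp [add_comm]

noncomputable def gv (q D E z : ℂ) (k : ℕ) : ℂ :=
  qpn q (z*D*E) k * (qpn q D (k+1) * qpn q E (k+1)) /
    (qpn q q k * qpn q (z*E) (k+1) * qpn q (z*D) (k+1)) *
    ((-1) ^ k * z ^ (k+1)) * (q ^ (k.choose 2) * q ^ k)

noncomputable def rv (D E z : ℂ) : ℂ := (1 - z*D*E) * (1 - z) / ((1 - z*E) * (1 - z*D))

lemma step_v0 (q D E z : ℂ) (hE : ∀ n, qpn q (z*E) n ≠ 0) (hD : ∀ n, qpn q (z*D) n ≠ 0) :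
    sv q D E z 0 - rv D E z * sv q D E (z*q) 0 = gv q D E z 0 := by
  have h1 := hE 1
  have h2 := hD 1
  simp only [qpn_succ, qpn_zero, pow_zero, mul_one, one_mul] at h1 h2
  simp [sv, wv, gv, rv, qpn_zero, qpn_succ]
  field_simp
  ring

lemma step_v (q D E z : ℂ) (hq : ‖q‖ < 1)
    (hE : ∀ n, qpn q (z*E) n ≠ 0) (hD : ∀ n, qpn q (z*D) n ≠ 0) (k : ℕ) :
    sv q D E z (k+1) - rv D E z * sv q D E (z*q) (k+1) = gv q D E z (k+1) - gv q D E z k := by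
  have h1 := qpn_succ' q (z*E) (k+1)
  have h2 := qpn_succ' q (z*D) (k+1)
  have h3 := qpn_succ' q (z*D*E) k
  have n1 := hE (k+2)
  have n2 := hD (k+2)
  have e1 : z*q*D*E = z*D*E*q := by ring
  have e2 : z*q*E = z*E*q := by ring
  have e3 : z*q*D = z*D*q := by ring
  have A1 : rv D E z * sv q D E (z*q) (k+1) =
      (1 - z) * (qpn q (z*D*E) (k+1) * (1 - z*D*E*q^(2*k+2))) * (qpn q D (k+1) * qpn q E (k+1)) /
        (qpn q q (k+1) * qpn q (z*E) (k+2) * qpn q (z*D) (k+2)) * (-(z*q))^(k+1) *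
        q ^ ((k+1).choose 2) := by
    rw [h1] at n1
    rw [h2] at n2
    rw [h1, h2, h3, sv, wv, rv, e1, e2, e3]
    have := left_ne_zero_of_mul n1
    have := left_ne_zero_of_mul n2
    have := right_ne_zero_of_mul n1
    have := right_ne_zero_of_mul n2
    have := qpn_q_ne q hq (k+1)
    field_simp
    ring
  rw [A1]
  have m1 := hE k
  have m2 := hD k
  have m3 := qpn_q_ne q hq k
  have m4 := one_sub_ne q hq k
  simp only [sv, wv, gv, qpn_succ, ch2] at *
  generalize qpn q (z*E) k = x1 at *
  generalize qpn q (z*D) k = x2 at *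
  generalize qpn q (z*D*E) k = x3 at *
  generalize qpn q D k = x4 at *
  generalize qpn q E k = x5 at *
  generalize qpn q q k = x6 at *
  have a1 : 1 - z*E*q^k ≠ 0 := right_ne_zero_of_mul (left_ne_zero_of_mul n1)
  have a2 : 1 - z*E*q^(k+1) ≠ 0 := right_ne_zero_of_mul n1
  have a3 : 1 - z*D*q^k ≠ 0 := right_ne_zero_of_mul (left_ne_zero_of_mul n2)
  have a4 : 1 - z*D*q^(k+1) ≠ 0 := right_ne_zero_of_mul n2
  clear n1 n2 h1 h2 h3 A1 hE hD
  have p1 : q ^ (2*k+1) = (q^k)^2*q := by ring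
  have p2 : q ^ (2*k+2) = (q^k)^2*q^2 := by ring
  have p3 : (-z)^(k+1) = -((-1)^k*z^k*z) := by rw [neg_pow]; ring
  have p4 : (-(z*q))^(k+1) = -((-1)^k*z^k*z*q*q^k) := by rw [neg_pow]; ring
  have p5 : q^(k+1) = q^k*q := pow_succ _ _
  have p6 : z^(k+1) = z^k*z := pow_succ _ _
  have p7 : z^(k+1+1) = z^k*z*z := by ring
  have p8 : (-1:ℂ)^(k+1) = -(-1)^k := by ring
  simp only [p1, p2, p3, p4, p5, p6, p7, p8, pow_add q] at *
  generalize q ^ k.choose 2 = x7 at *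
  generalize q ^ k = K at *
  generalize z ^ k = Z at *
  generalize (-1 : ℂ) ^ k = W at *
  generalize g1 : 1 - z * E * K = d1 at *
  generalize g2 : 1 - z * E * (K * q) = d2 at *
  generalize g3 : 1 - z * D * K = d3 at *
  generalize g4 : 1 - z * D * (K * q) = d4 at *
  generalize g5 : 1 - q * K = d5 at *
  field_simp
  subst g1 g2 g3 g4 g5
  ring

lemma part_v (q D E z : ℂ) (hq : ‖q‖ < 1)
    (hE : ∀ n, qpn q (z*E) n ≠ 0) (hD : ∀ n, qpn q (z*D) n ≠ 0) (k : ℕ) :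
    ∑ i ∈ Finset.range (k+1), (sv q D E z i - rv D E z * sv q D E (z*q) i) = gv q D E z k := by
  induction k with
  | zero => simpa using step_v0 q D E z hE hD
  | succ k ih => rw [Finset.sum_range_succ, ih, step_v q D E z hq hE hD]; ring

open Filter Topology in
lemma summ_sup (q : ℂ) (hq : ‖q‖ < 1) (hq0 : q ≠ 0) (R : ℝ) (hR : 0 < R) :
    Summable fun k : ℕ => R ^ k * ‖q‖ ^ (k.choose 2) := by
  have hp : 0 < ‖q‖ := norm_pos_iff.mpr hq0
  refine summable_of_ratio_test_tendsto_lt_one (l := 0) one_pos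
    (Eventually.of_forall fun k => by positivity) ?_
  have h : Tendsto (fun k : ℕ => R * ‖q‖ ^ k) atTop (𝓝 (R * 0)) :=
    (tendsto_pow_atTop_nhds_zero_of_lt_one (norm_nonneg _) hq).const_mul _
  rw [mul_zero] at h
  refine h.congr fun k => ?_
  rw [ch2, Real.norm_of_nonneg (by positivity), Real.norm_of_nonneg (by positivity)]
  field_simp
  ring

lemma wv_bdd (q : ℂ) (hq : ‖q‖ < 1) (R : ℝ) (hR : 0 ≤ R) :
    ∃ M : ℝ, 1 ≤ M ∧ ∀ x : ℂ, ‖x‖ ≤ R → ∀ n, ‖wv q x n‖ ≤ M := by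
  obtain ⟨M, hM1, hM⟩ := qpn_bdd q hq R
  refine ⟨(1 + R) * M, by nlinarith, fun x hx n => ?_⟩
  cases n with
  | zero => simp [wv]; nlinarith
  | succ k =>
    simp only [wv, norm_mul]
    refine mul_le_mul ?_ (hM x hx k) (norm_nonneg _) (by linarith)
    refine (norm_sub_le _ _).trans ?_
    rw [norm_one, norm_mul, norm_pow]
    have : ‖q‖ ^ (2*k+1) ≤ 1 := pow_le_one₀ (norm_nonneg _) hq.le
    have := mul_le_mul hx this (by positivity) hR
    linarith

lemma sv_bdd (q : ℂ) (hq : ‖q‖ < 1) (R m : ℝ) (hR : 1 ≤ R) (hm : 0 < m) :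
    ∃ M : ℝ, 0 < M ∧ ∀ D E z : ℂ, ‖D‖ ≤ R → ‖E‖ ≤ R → ‖z‖ ≤ R →
      (∀ k, m ≤ ‖qpn q (z*E) k‖) → (∀ k, m ≤ ‖qpn q (z*D) k‖) → 
      ∀ k, ‖sv q D E z k‖ ≤ M * (‖z‖ ^ k * ‖q‖ ^ (k.choose 2)) := by
  obtain ⟨M, hM1, hM⟩ := qpn_bdd q hq R
  obtain ⟨W, hW1, hW⟩ := wv_bdd q hq (R*R*R) (by positivity)
  obtain ⟨l, hl, hl'⟩ := qpn_lower q hq q (qpn_q_ne q hq) (qp_q_ne q hq)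
  have hl2 : ∀ k, l ≤ ‖qpn q q k‖ := fun k => by simpa using hl' 0 k
  refine ⟨W * (M * M) / (l * m * m), by positivity, fun D E z hD hE hz h1 h2 k => ?_⟩
  simp only [sv, norm_mul, norm_div, norm_pow, norm_neg]
  rw [← mul_assoc (W * (M * M) / (l * m * m))]
  have hw : ‖wv q (z*D*E) k‖ ≤ W := by
    apply hW
    rw [norm_mul, norm_mul]
    gcongr
  gcongr
  · exact hM D hD k
  · exact hM E hE k
  · exact hl2 k
  · exact h1 k
  · exact h2 k

lemma sv_summ (q : ℂ) (hq : ‖q‖ < 1) (hq0 : q ≠ 0) (D E z : ℂ)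
    (hE : ∀ n, qpn q (z*E) n ≠ 0) (hD : ∀ n, qpn q (z*D) n ≠ 0)
    (hE' : qp q (z*E) ≠ 0) (hD' : qp q (z*D) ≠ 0) : Summable (sv q D E z) := by
  obtain ⟨m1, hm1, h1⟩ := qpn_lower q hq _ hE hE'
  obtain ⟨m2, hm2, h2⟩ := qpn_lower q hq _ hD hD'
  set R := 1 + ‖D‖ + ‖E‖ + ‖z‖ with hR
  have := norm_nonneg D
  have := norm_nonneg E
  have := norm_nonneg z
  obtain ⟨M, hM, h⟩ := sv_bdd q hq R (min m1 m2) (by linarith) (lt_min hm1 hm2)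
  refine Summable.of_norm_bounded ((summ_sup q hq hq0 R (by linarith)).mul_left M) fun k => ?_
  refine (h D E z (by linarith) (by linarith) (by linarith)
    (fun k => (min_le_left _ _).trans (by simpa using h1 0 k))
    (fun k => (min_le_right _ _).trans (by simpa using h2 0 k)) k).trans ?_
  gcongr
  linarith

open Filter Topology in
lemma gv_tendsto (q : ℂ) (hq : ‖q‖ < 1) (hq0 : q ≠ 0) (D E z : ℂ)
    (hE : ∀ n, qpn q (z*E) n ≠ 0) (hD : ∀ n, qpn q (z*D) n ≠ 0)
    (hE' : qp q (z*E) ≠ 0) (hD' : qp q (z*D) ≠ 0) :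
    Tendsto (gv q D E z) atTop (𝓝 0) := by
  have t1 : ∀ x, Tendsto (fun k => qpn q x k) atTop (𝓝 (qp q x)) := qpn_tendsto q hq
  have t2 : ∀ x, Tendsto (fun k => qpn q x (k+1)) atTop (𝓝 (qp q x)) :=
    fun x => (tendsto_add_atTop_iff_nat 1).mpr (t1 x)
  have hne : qp q q * qp q (z*E) * qp q (z*D) ≠ 0 :=
    mul_ne_zero (mul_ne_zero (qp_q_ne q hq) hE') hD'
  have t3 := ((t1 (z*D*E)).mul ((t2 D).mul (t2 E))).div (((t1 q).mul (t2 (z*E))).mul (t2 (z*D))) hne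
  have t4 : Tendsto (fun k : ℕ => ((-1) ^ k * z ^ (k+1)) * (q ^ (k.choose 2) * q ^ k)) atTop (𝓝 0) := by
    have hs := (summ_sup q hq hq0 (‖z‖+1) (by positivity)).tendsto_atTop_zero
    have hs2 := hs.const_mul ‖z‖
    rw [mul_zero] at hs2
    refine squeeze_zero_norm (fun k => ?_) hs2
    simp only [norm_mul, norm_pow, norm_neg, norm_one, one_pow, one_mul]
    have a1 : ‖q‖^k ≤ 1 := pow_le_one₀ (norm_nonneg _) hq.le
    have a2 : ‖z‖^k ≤ (‖z‖+1)^k := by gcongr; linarith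
    calc ‖z‖^(k+1) * (‖q‖^(k.choose 2) * ‖q‖^k) ≤ (‖z‖ * (‖z‖+1)^k) * (‖q‖^(k.choose 2) * 1) := by
          rw [pow_succ']; gcongr
      _ = _ := by ring
  have t5 := t3.mul t4
  rw [mul_zero] at t5
  refine t5.congr fun k => ?_
  simp only [gv, Pi.div_apply]
  ring

open Filter Topology in
lemma sv_rec (q : ℂ) (hq : ‖q‖ < 1) (hq0 : q ≠ 0) (D E z : ℂ)
    (hE : ∀ n, qpn q (z*E) n ≠ 0) (hD : ∀ n, qpn q (z*D) n ≠ 0)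
    (hE' : qp q (z*E) ≠ 0) (hD' : qp q (z*D) ≠ 0)
    (hs' : Summable (sv q D E (z*q))) :
    ∑' k, sv q D E z k = rv D E z * ∑' k, sv q D E (z*q) k := by
  have hs := sv_summ q hq hq0 D E z hE hD hE' hD'
  have h1 := (hs.hasSum.sub (hs'.hasSum.mul_left (rv D E z))).tendsto_sum_nat
  have h2 := (tendsto_add_atTop_iff_nat 1).mpr h1
  have h3 := gv_tendsto q hq hq0 D E z hE hD hE' hD'
  have h4 := tendsto_nhds_unique h2 (h3.congr fun k => (part_v q D E z hq hE hD k).symm)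
  exact sub_eq_zero.mp h4

lemma shift_ne (q : ℂ) (x : ℂ) (h : ∀ n, qpn q x n ≠ 0) (N n : ℕ) : qpn q (x * q ^ N) n ≠ 0 := by
  intro h0
  exact h (N+n) (by rw [qpn_add, h0, mul_zero])

lemma shift_ne' (q : ℂ) (hq : ‖q‖ < 1) (x : ℂ) (h : qp q x ≠ 0) (N : ℕ) : qp q (x * q ^ N) ≠ 0 := by
  intro h0
  exact h (by rw [qp_shift q hq x N, h0, mul_zero])

lemma sv_iter (q : ℂ) (hq : ‖q‖ < 1) (hq0 : q ≠ 0) (D E z : ℂ)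
    (hE : ∀ n, qpn q (z*E) n ≠ 0) (hD : ∀ n, qpn q (z*D) n ≠ 0)
    (hE' : qp q (z*E) ≠ 0) (hD' : qp q (z*D) ≠ 0) (N : ℕ) :
    ∑' k, sv q D E z k = qpn q (z*D*E) N * qpn q z N / (qpn q (z*E) N * qpn q (z*D) N) *
      ∑' k, sv q D E (z*q^N) k := by
  have eE : ∀ N, z*q^N*E = z*E*q^N := fun N => by ring
  have eD : ∀ N, z*q^N*D = z*D*q^N := fun N => by ring
  have H : ∀ N, (∀ n, qpn q (z*q^N*E) n ≠ 0) ∧ (∀ n, qpn q (z*q^N*D) n ≠ 0) ∧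
      qp q (z*q^N*E) ≠ 0 ∧ qp q (z*q^N*D) ≠ 0 := fun N => by
    rw [eE, eD]
    exact ⟨shift_ne q _ hE N, shift_ne q _ hD N, shift_ne' q hq _ hE' N, shift_ne' q hq _ hD' N⟩
  induction N with
  | zero => simp [qpn_zero]
  | succ N ih =>
    obtain ⟨a1, a2, a3, a4⟩ := H N
    obtain ⟨b1, b2, b3, b4⟩ := H (N+1)
    have e : z*q^(N+1) = z*q^N*q := by ring
    rw [e] at b1 b2 b3 b4 ⊢
    rw [ih, sv_rec q hq hq0 D E (z*q^N) a1 a2 a3 a4 (sv_summ q hq hq0 D E _ b1 b2 b3 b4)]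
    simp only [qpn_succ, rv, eE, eD]
    have e5 : z*D*q^N*E = z*D*E*q^N := by ring
    rw [e5]
    simp only [div_eq_mul_inv, mul_inv]
    ring

open Filter Topology in
lemma sv_sum (q : ℂ) (hq : ‖q‖ < 1) (hq0 : q ≠ 0) (D E z : ℂ)
    (hE : ∀ n, qpn q (z*E) n ≠ 0) (hD : ∀ n, qpn q (z*D) n ≠ 0)
    (hE' : qp q (z*E) ≠ 0) (hD' : qp q (z*D) ≠ 0) :
    ∑' k, sv q D E z k = qp q (z*D*E) * qp q z / (qp q (z*E) * qp q (z*D)) := by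
  have t1 : ∀ x, Tendsto (fun k => qpn q x k) atTop (𝓝 (qp q x)) := qpn_tendsto q hq
  have t2 := ((t1 (z*D*E)).mul (t1 z)).div ((t1 (z*E)).mul (t1 (z*D))) (mul_ne_zero hE' hD')
  have t3 : Tendsto (fun N : ℕ => ∑' k, sv q D E (z*q^N) k) atTop
      (𝓝 (∑' k : ℕ, if k = 0 then (1:ℂ) else 0)) := by
    obtain ⟨m1, hm1, h1⟩ := qpn_lower q hq _ hE hE'
    obtain ⟨m2, hm2, h2⟩ := qpn_lower q hq _ hD hD'
    set R := 1 + ‖D‖ + ‖E‖ + ‖z‖ with hR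
    have := norm_nonneg D
    have := norm_nonneg E
    have := norm_nonneg z
    obtain ⟨M, hM, h⟩ := sv_bdd q hq R (min m1 m2) (by linarith) (lt_min hm1 hm2)
    have hz : ∀ N : ℕ, ‖z*q^N‖ ≤ R := fun N => by
      rw [norm_mul, norm_pow]
      have : ‖q‖^N ≤ 1 := pow_le_one₀ (norm_nonneg _) hq.le
      nlinarith
    have hb : ∀ N k : ℕ, ‖sv q D E (z*q^N) k‖ ≤ M * (‖z*q^N‖ ^ k * ‖q‖ ^ (k.choose 2)) := by
      intro N k
      refine h D E _ (by linarith) (by linarith) (hz N)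
        (fun k => (min_le_left _ _).trans ?_) (fun k => (min_le_right _ _).trans ?_) k
      · rw [show z*q^N*E = z*E*q^N by ring]; exact h1 N k
      · rw [show z*q^N*D = z*D*q^N by ring]; exact h2 N k
    refine tendsto_tsum_of_dominated_convergence ((summ_sup q hq hq0 R (by linarith)).mul_left M)
      (fun k => ?_) (Eventually.of_forall fun N k => (hb N k).trans ?_)
    · cases k with
      | zero => simp [sv, wv, qpn_zero]
      | succ k =>
        simp only [Nat.add_eq_zero_iff, one_ne_zero, and_false, if_false]
        refine squeeze_zero_norm (fun N => hb N (k+1)) ?_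
        have c1 : Tendsto (fun N : ℕ => ‖z*q^N‖) atTop (𝓝 0) := by
          have := ((tendsto_pow_atTop_nhds_zero_of_norm_lt_one hq).const_mul z).norm
          simpa using this
        have c2 := ((c1.pow (k+1)).mul_const (‖q‖^((k+1).choose 2))).const_mul M
        simpa using c2
    · have := hz N
      gcongr
  rw [tsum_ite_eq] at t3
  have t4 := t2.mul t3
  rw [mul_one] at t4
  exact tendsto_nhds_unique (tendsto_const_nhds.congr fun N =>
    sv_iter q hq hq0 D E z hE hD hE' hD' N) t4

lemma wv_id (q a : ℂ) (ha1 : a ≠ 1) (j k : ℕ) :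
    (1 - a * q ^ (2 * (j + k))) / (1 - a) * (qpn q a (j+k) * qpn q (a * q^(j+k)) j) =
      qpn q (q*a) (2*j) * wv q (q*a*q^(2*j)) k := by
  have h1 : 1 - a ≠ 0 := sub_ne_zero.mpr (Ne.symm ha1)
  rw [← qpn_add, show j + k + j = 2*j+k by ring, mul_comm q a]
  cases k with
  | zero =>
    have h2 := qpn_succ q a (2*j)
    rw [qpn_succ'] at h2
    simp only [wv, add_zero, mul_one]
    field_simp
    linear_combination -h2
  | succ k =>
    have h2 := qpn_succ' q a (2*j+k)
    rw [qpn_add q (a*q)] at h2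
    rw [← add_assoc (2*j) k 1, h2]
    simp only [wv]
    field_simp
    ring

noncomputable def tR (q a b c d e : ℂ) (m : ℕ) : ℂ :=
  (qpn q (q * a / (b * c)) m * qpn q d m * qpn q e m) /
        (qpn q q m * qpn q (q * a / b) m * qpn q (q * a / c) m) * (q * a / (d * e)) ^ m

noncomputable def tL (q a b c d e : ℂ) (n : ℕ) : ℂ :=
      (1 - a * q ^ (2 * n)) / (1 - a) *
        ((qpn q a n * qpn q b n * qpn q c n * qpn q d n * qpn q e n) /
          (qpn q q n * qpn q (q * a / b) n * qpn q (q * a / c) n * qpn q (q * a / d) n *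
            qpn q (q * a / e) n)) *
        (-(q ^ 2 * a ^ 2 / (b * c * d * e))) ^ n * q ^ Nat.choose n 2

noncomputable def cF (q a d e : ℂ) (j : ℕ) : ℂ :=
  qpn q (q*a) (2*j) / (qpn q (q*a/d) j * qpn q (q*a/e) j)

noncomputable def FF (q a b c d e : ℂ) (j k : ℕ) : ℂ :=
  tR q a b c d e j * cF q a d e j * sv q (d*q^j) (e*q^j) (q*a/(d*e)) k

noncomputable def CC (q a b c d e : ℂ) (n : ℕ) : ℂ :=
      (1 - a * q ^ (2 * n)) / (1 - a) *
        ((qpn q a n * qpn q d n * qpn q e n) /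
          (qpn q q n * qpn q (q * a / b) n * qpn q (q * a / c) n * qpn q (q * a / d) n *
            qpn q (q * a / e) n)) * (q * a^2 * q^n / (c*d*e))^n

lemma FF_eq (q a b c d e : ℂ) (hq : ‖q‖ < 1) (hq0 : q ≠ 0) (ha0 : a ≠ 0)
    (ha1 : a ≠ 1) (hb : b ≠ 0) (hc : c ≠ 0) (hd : d ≠ 0) (he : e ≠ 0)
    (hden : ∀ n : ℕ, qpn q (q * a / b) n ≠ 0 ∧ qpn q (q * a / c) n ≠ 0 ∧
      qpn q (q * a / d) n ≠ 0 ∧ qpn q (q * a / e) n ≠ 0) (j k : ℕ) :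
    FF q a b c d e j k = CC q a b c d e (j+k) *
      tS q (a*q^(j+k)) (q*a/(b*c)) (c/(a*q^(j+k))) j k := by
  have hw := wv_id q a ha1 j k
  have e1 : a*q^(j+k) * (q*a/(b*c)) * (c/(a*q^(j+k))) = q*a/b := by field_simp
  have e2 : qpn q (c/(a*q^(j+k))) k = (-(c/(a*q^(j+k))))^k * q^(k.choose 2) *
      qpn q (q*a/c*q^j) k := by
    apply qpn_rev _ _ _ _ hq0
    rw [pow_add]; field_simp
  have e3 : q*a/(d*e)*(d*q^j)*(e*q^j) = q*a*q^(2*j) := by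
    rw [two_mul, pow_add]; field_simp
  have e4 : q*a/(d*e)*(e*q^j) = q*a/d*q^j := by field_simp
  have e5 : q*a/(d*e)*(d*q^j) = q*a/e*q^j := by field_simp
  have e6 : (-(c/(a*q^(j+k))))^k * (c/(a*q^(j+k)))^j * (q * a^2 * q^(j+k) / (c*d*e))^(j+k)
      = (-(q*a/(d*e)))^k * (q*a/(d*e))^j := by
    have hx : (c/(a*q^(j+k))) * (q * a^2 * q^(j+k) / (c*d*e)) = q*a/(d*e) := by field_simp
    rw [neg_pow (c/(a*q^(j+k))), neg_pow (q*a/(d*e)), mul_assoc ((-1)^k), mul_assoc ((-1)^k), mul_assoc ((-1)^k),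
      ← pow_add, ← pow_add, add_comm k j, ← mul_pow, hx]
  obtain ⟨u1, v1, w1, y1⟩ := hden j
  obtain ⟨u2, v2, w2, y2⟩ := hden (j+k)
  have q1 := qpn_q_ne q hq j
  have q2 := qpn_q_ne q hq k
  have q3 := qpn_q_ne q hq (j+k)
  simp only [FF, CC, tR, cF, sv, tS]
  rw [e1, e2, e3, e4, e5]
  rw [qpn_add q _ j k] at u2 v2 w2 y2
  rw [qpn_add q (q*a/b) j k, qpn_add q (q*a/c) j k, qpn_add q (q*a/d) j k, qpn_add q (q*a/e) j k,
    qpn_add q d j k, qpn_add q e j k]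
  replace u2 := right_ne_zero_of_mul u2
  replace v2 := right_ne_zero_of_mul v2
  replace w2 := right_ne_zero_of_mul w2
  replace y2 := right_ne_zero_of_mul y2
  generalize qpn q (q*a) (2*j) = p1 at *
  generalize wv q _ k = p2 at *
  generalize (-(c/(a*q^(j+k))))^k = s1 at *
  generalize (c/(a*q^(j+k)))^j = s2 at *
  generalize (q * a^2 * q^(j+k) / (c*d*e))^(j+k) = s3 at *
  generalize (-(q*a/(d*e)))^k = s4 at *
  generalize (q*a/(d*e))^j = s5 at *
  generalize (1 - a * q ^ (2 * (j + k))) / (1 - a) = s6 at *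
  generalize qpn q a _ = p3 at *
  generalize qpn q (a * q^(j+k)) j = p4 at *
  generalize qpn q (q*a/b) j = g1 at *
  generalize qpn q (q*a/c) j = g2 at *
  generalize qpn q (q*a/d) j = g3 at *
  generalize qpn q (q*a/e) j = g4 at *
  generalize qpn q (q*a/b*q^j) k = g5 at *
  generalize qpn q (q*a/c*q^j) k = g6 at *
  generalize qpn q (q*a/d*q^j) k = g7 at *
  generalize qpn q (q*a/e*q^j) k = g8 at *
  generalize qpn q q (j+k) = g9 at *
  generalize qpn q q j = g10 at *
  generalize qpn q q k = g11 at *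
  generalize qpn q _ j = f1 at *
  generalize qpn q d j = f2 at *
  generalize qpn q e j = f3 at *
  generalize qpn q (d*q^j) k = f4 at *
  generalize qpn q (e*q^j) k = f5 at *
  generalize q^(k.choose 2) = f6 at *
  clear e1 e2 e3 e4 e5 hden
  calc _ = (p1 * p2) * (s4 * s5) * (f1 * f2 * f3 * f4 * f5 * f6 / (g10 * g1 * g2 * g3 * g4 * g11 * g7 * g8)) := by
        field_simp
    _ = (s6 * (p3 * p4)) * (s1 * s2 * s3) * (f1 * f2 * f3 * f4 * f5 * f6 / (g10 * g1 * g2 * g3 * g4 * g11 * g7 * g8)) := by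
        rw [hw, e6]
    _ = (s6 * (p3 * p4)) * (s1 * s2 * s3) * (f1 * f2 * f3 * f4 * f5 * f6 / (g10 * g1 * g2 * g3 * g4 * g11 * g7 * g8)) * (g9 * g9⁻¹) * (g5 * g5⁻¹) * (g6 * g6⁻¹) := by
        rw [mul_inv_cancel₀ q3, mul_inv_cancel₀ u2, mul_inv_cancel₀ v2, mul_one, mul_one, mul_one]
    _ = _ := by
        simp only [div_eq_mul_inv, mul_inv]
        ring

lemma tL_eq (q a b c d e : ℂ) (hq : ‖q‖ < 1) (hq0 : q ≠ 0) (ha0 : a ≠ 0)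
    (ha1 : a ≠ 1) (hb : b ≠ 0) (hc : c ≠ 0) (hd : d ≠ 0) (he : e ≠ 0)
    (hden : ∀ n : ℕ, qpn q (q * a / b) n ≠ 0 ∧ qpn q (q * a / c) n ≠ 0 ∧
      qpn q (q * a / d) n ≠ 0 ∧ qpn q (q * a / e) n ≠ 0) (n : ℕ) :
    tL q a b c d e n = ∑ p ∈ Finset.HasAntidiagonal.antidiagonal n, FF q a b c d e p.1 p.2 := by
  rw [Finset.Nat.sum_antidiagonal_eq_sum_range_succ (fun i j => FF q a b c d e i j)]
  have h1 : ∀ i ∈ Finset.range (n+1), FF q a b c d e i (n-i) = CC q a b c d e n *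
      tS q (a*q^n) (q*a/(b*c)) (c/(a*q^n)) i (n-i) := by
    intro i hi
    have := FF_eq q a b c d e hq hq0 ha0 ha1 hb hc hd he hden i (n-i)
    rwa [Nat.add_sub_cancel' (Nat.lt_succ_iff.mp (Finset.mem_range.mp hi))] at this
  rw [Finset.sum_congr rfl h1, ← Finset.mul_sum, saal _ _ _ _ hq]
  have e1 : a*q^n*(c/(a*q^n)) = c := by field_simp
  have e2 : q*a/(b*c)*(c/(a*q^n)) = q/(b*q^n) := by field_simp
  have e3 : qpn q (q/(b*q^n)) n = (-(q/(b*q^n)))^n * q^(n.choose 2) * qpn q b n := by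
    apply qpn_rev _ _ _ _ hq0
    field_simp
  have e4 : (-(q ^ 2 * a ^ 2 / (b * c * d * e))) ^ n =
      (q * a^2 * q^n / (c*d*e))^n * (-(q/(b*q^n)))^n := by
    rw [← mul_pow (q * a^2 * q^n / (c*d*e))]; congr 1; field_simp
  rw [e1, e2, e3, tL, CC, e4]
  ring

lemma tsum_anti (F : ℕ × ℕ → ℂ) (h : Summable F) :
    ∑' n, ∑ p ∈ Finset.HasAntidiagonal.antidiagonal n, F p = ∑' j, ∑' k, F (j, k) := by
  rw [← h.tsum_prod' (fun j => h.prod_factor j),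
    ← Finset.HasAntidiagonal.sigmaAntidiagonalEquivProd.tsum_eq F]
  have h2 := Finset.HasAntidiagonal.sigmaAntidiagonalEquivProd.summable_iff.mpr h
  refine Eq.trans ?_ (Summable.tsum_sigma' (fun n => (hasSum_fintype _).summable) h2).symm
  refine tsum_congr fun n => ?_
  rw [tsum_fintype, ← Finset.sum_coe_sort]
  rfl

lemma FF_summ (q a b c d e : ℂ) (hq : ‖q‖ < 1) (hq0 : q ≠ 0)
    (hd : d ≠ 0) (he : e ≠ 0)
    (hden : ∀ n : ℕ, qpn q (q * a / b) n ≠ 0 ∧ qpn q (q * a / c) n ≠ 0 ∧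
      qpn q (q * a / d) n ≠ 0 ∧ qpn q (q * a / e) n ≠ 0)
    (hden' : qp q (q * a / d) ≠ 0 ∧ qp q (q * a / e) ≠ 0)
    (hs : Summable (tR q a b c d e)) :
    Summable fun p : ℕ × ℕ => FF q a b c d e p.1 p.2 := by
  obtain ⟨m1, hm1, h1⟩ := qpn_lower q hq _ (fun n => (hden n).2.2.1) hden'.1
  obtain ⟨m2, hm2, h2⟩ := qpn_lower q hq _ (fun n => (hden n).2.2.2) hden'.2
  set z := q*a/(d*e) with hzd
  set R := 1 + ‖d‖ + ‖e‖ + ‖z‖ with hR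
  have := norm_nonneg d
  have := norm_nonneg e
  have := norm_nonneg z
  obtain ⟨M, hM, h⟩ := sv_bdd q hq R (min m1 m2) (by linarith) (lt_min hm1 hm2)
  obtain ⟨M', hM1', hM'⟩ := qpn_bdd q hq ‖q*a‖
  have hz : ∀ (x : ℂ) (N : ℕ), ‖x‖ ≤ R → ‖x*q^N‖ ≤ R := fun x N hx => by
    rw [norm_mul, norm_pow]
    have : ‖q‖^N ≤ 1 := pow_le_one₀ (norm_nonneg _) hq.le
    have := norm_nonneg x
    nlinarith
  have hb : ∀ j k : ℕ, ‖sv q (d*q^j) (e*q^j) z k‖ ≤ M * (R ^ k * ‖q‖ ^ (k.choose 2)) := by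
    intro j k
    refine (h _ _ _ (hz _ _ (by linarith)) (hz _ _ (by linarith)) (by linarith)
      (fun k => (min_le_left _ _).trans ?_) (fun k => (min_le_right _ _).trans ?_) k).trans ?_
    · rw [show z*(e*q^j) = q*a/d*q^j by rw [hzd]; field_simp]; exact h1 j k
    · rw [show z*(d*q^j) = q*a/e*q^j by rw [hzd]; field_simp]; exact h2 j k
    · gcongr; linarith
  have hc : ∀ j, ‖cF q a d e j‖ ≤ M' / (m1 * m2) := by
    intro j
    have a1 : m1 ≤ ‖qpn q (q*a/d) j‖ := by simpa using h1 0 j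
    have a2 : m2 ≤ ‖qpn q (q*a/e) j‖ := by simpa using h2 0 j
    have a3 := hM' _ le_rfl (2*j)
    rw [cF, norm_div, norm_mul]
    gcongr
  have s1 : Summable fun j => ‖tR q a b c d e j‖ * (M' / (m1*m2)) := hs.norm.mul_right _
  have s2 := (summ_sup q hq hq0 R (by linarith)).mul_left M
  refine Summable.of_norm_bounded (s1.mul_of_nonneg s2 (fun j => by positivity)
    (fun k => by positivity)) fun p => ?_
  simp only [FF, norm_mul]
  have := hc p.1
  have := hb p.1 p.2
  gcongr

lemma main_aux (q a b c d e : ℂ) (hq : ‖q‖ < 1) (hqa : q * a ≠ 0)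
    (ha1 : a ≠ 1) (hbcde : b * c * d * e ≠ 0)
    (hden : ∀ n : ℕ, qpn q (q * a / b) n ≠ 0 ∧ qpn q (q * a / c) n ≠ 0 ∧
      qpn q (q * a / d) n ≠ 0 ∧ qpn q (q * a / e) n ≠ 0)
    (hden' : qp q (q * a / d) ≠ 0 ∧ qp q (q * a / e) ≠ 0)
    (hs : Summable (tR q a b c d e)) :
    ∑' n, tL q a b c d e n =
      qp q (q * a) * qp q (q * a / (d * e)) / (qp q (q * a / d) * qp q (q * a / e)) *
      ∑' m, tR q a b c d e m := by
  have hq0 := left_ne_zero_of_mul hqa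
  have ha0 := right_ne_zero_of_mul hqa
  have he := right_ne_zero_of_mul hbcde
  have hd := right_ne_zero_of_mul (left_ne_zero_of_mul hbcde)
  have hc := right_ne_zero_of_mul (left_ne_zero_of_mul (left_ne_zero_of_mul hbcde))
  have hb := left_ne_zero_of_mul (left_ne_zero_of_mul (left_ne_zero_of_mul hbcde))
  rw [tsum_congr (tL_eq q a b c d e hq hq0 ha0 ha1 hb hc hd he hden),
    tsum_anti (fun p => FF q a b c d e p.1 p.2)
      (FF_summ q a b c d e hq hq0 hd he hden hden' hs), ← tsum_mul_left]
  refine tsum_congr fun j => ?_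
  simp only [FF]
  rw [tsum_mul_left]
  have e3 : q*a/(d*e)*(d*q^j)*(e*q^j) = q*a*q^(2*j) := by
    rw [two_mul, pow_add]; field_simp
  have e4 : q*a/(d*e)*(e*q^j) = q*a/d*q^j := by field_simp
  have e5 : q*a/(d*e)*(d*q^j) = q*a/e*q^j := by field_simp
  have nd : ∀ n, qpn q (q*a/d) n ≠ 0 := fun n => (hden n).2.2.1
  have ne : ∀ n, qpn q (q*a/e) n ≠ 0 := fun n => (hden n).2.2.2
  rw [sv_sum q hq hq0 _ _ _ (by rw [e4]; exact shift_ne q _ nd j)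
    (by rw [e5]; exact shift_ne q _ ne j) (by rw [e4]; exact shift_ne' q hq _ hden'.1 j)
    (by rw [e5]; exact shift_ne' q hq _ hden'.2 j), e3, e4, e5, cF,
    qp_shift q hq (q*a) (2*j), qp_shift q hq (q*a/d) j, qp_shift q hq (q*a/e) j]
  simp only [div_eq_mul_inv, mul_inv]
  ring

/-- The very-well-poised series transformation (Gasper–Rahman, Exercise 2.22). -/
theorem vwp_transformation (q a b c d e : ℂ) (hq : ‖q‖ < 1)
    (ha1 : a ≠ 1) (hbcde : b * c * d * e ≠ 0)
    (hden : ∀ n : ℕ, qpn q (q * a / b) n ≠ 0 ∧ qpn q (q * a / c) n ≠ 0 ∧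
      qpn q (q * a / d) n ≠ 0 ∧ qpn q (q * a / e) n ≠ 0)
    (hden' : qp q (q * a / d) ≠ 0 ∧ qp q (q * a / e) ≠ 0)
    (hsum1 : Summable fun n : ℕ =>
      (1 - a * q ^ (2 * n)) / (1 - a) *
        ((qpn q a n * qpn q b n * qpn q c n * qpn q d n * qpn q e n) /
          (qpn q q n * qpn q (q * a / b) n * qpn q (q * a / c) n * qpn q (q * a / d) n *
            qpn q (q * a / e) n)) *
        (-(q ^ 2 * a ^ 2 / (b * c * d * e))) ^ n * q ^ Nat.choose n 2)
    (hsum2 : Summable fun m : ℕ =>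
      (qpn q (q * a / (b * c)) m * qpn q d m * qpn q e m) /
        (qpn q q m * qpn q (q * a / b) m * qpn q (q * a / c) m) * (q * a / (d * e)) ^ m) :
    (∑' n : ℕ,
        (1 - a * q ^ (2 * n)) / (1 - a) *
          ((qpn q a n * qpn q b n * qpn q c n * qpn q d n * qpn q e n) /
            (qpn q q n * qpn q (q * a / b) n * qpn q (q * a / c) n * qpn q (q * a / d) n *
              qpn q (q * a / e) n)) *
          (-(q ^ 2 * a ^ 2 / (b * c * d * e))) ^ n * q ^ Nat.choose n 2)
      = qp q (q * a) * qp q (q * a / (d * e)) / (qp q (q * a / d) * qp q (q * a / e)) *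
        ∑' m : ℕ,
          (qpn q (q * a / (b * c)) m * qpn q d m * qpn q e m) /
            (qpn q q m * qpn q (q * a / b) m * qpn q (q * a / c) m) *
          (q * a / (d * e)) ^ m := by
  by_cases hqa : q * a = 0
  · have h1 : ∀ n, qpn q 0 n = 1 := fun n => by simp [qpn]
    have h2 : qp q 0 = 1 := by simp [qp]
    have h3 : q ^ 2 * a ^ 2 = 0 := by rw [← mul_pow, hqa]; simp
    simp only [hqa, h3, zero_div, neg_zero, h1, h2]
    rw [tsum_eq_single 0 (fun n hn => by simp [hn]), tsum_eq_single 0 (fun n hn => by simp [hn])]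
    have h4 : 1 - a ≠ 0 := sub_ne_zero.mpr (Ne.symm ha1)
    simp [qpn_zero, h4]
  · exact main_aux q a b c d e hq hqa ha1 hbcde hden hden' hsum2
end
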